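/- Let G be a group, k a commutative G-ring, n a natural number, and ε ∈ k invertible. Then there is an isomorphism of graded k-modules Tor_*^{GR_n(ε)}(𝟙,𝟙) ≅ Tor_*^{k[G^n ⋊ Σ_n]}(k,k) = H_*(G^n ⋊ Σ_n; k), where Σ_n acts on G^n by permuting the factors. -/

import Mathlib

open scoped TensorProduct

noncomputable section

/-! ### Bar-complex homology of an augmented algebra

For a `k`-algebra `A` with augmentation `ε : A →ₐ[k] k` (the algebra map corresponding to
the trivial module `𝟙 = k`), we form the (unnormalized) bar complex `C_q = A^{⊗ q}`
(tensors over `k`), with the usual differential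
`d(a₁⊗…⊗a_q) = ε(a₁)(a₂⊗…) + Σ (-1)^i (…a_i a_{i+1}…) + (-1)^q ε(a_q)(a₁⊗…)`,
whose homology is `Tor_*^A(𝟙,𝟙)`. -/

/-- The modules `A^{⊗ q}` of the bar complex. -/
def barC (k : Type) [CommRing k] (A : Type) [Ring A] [Algebra k A] : ℕ → ModuleCat k
  | 0 => ModuleCat.of k k
  | (q + 1) => ModuleCat.of k (A ⊗[k] (barC k A q))

variable (k : Type) [CommRing k] (A : Type) [Ring A] [Algebra k A] (ε : A →ₐ[k] k)

/-- Left multiplication of `A` on the leftmost bar factor (via `ε` in degree `0`). -/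
def barAct : ∀ q : ℕ, A →ₗ[k] ((barC k A q : Type) →ₗ[k] (barC k A q : Type))
  | 0 => (LinearMap.lsmul k k).comp ε.toLinearMap
  | (q + 1) =>
    show A →ₗ[k] ((A ⊗[k] (barC k A q : Type)) →ₗ[k] (A ⊗[k] (barC k A q : Type))) from
    { toFun := fun a => TensorProduct.map (LinearMap.mulLeft k a) LinearMap.id
      map_add' := by
        intro a b
        refine TensorProduct.ext' fun x y => ?_
        simp [add_mul, TensorProduct.add_tmul]
      map_smul' := by
        intro c a
        refine TensorProduct.ext' fun x y => ?_
        simp [TensorProduct.smul_tmul', smul_mul_assoc] }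

/-- All terms of the bar differential except the first face. -/
def barB : ∀ q : ℕ, ((A ⊗[k] (barC k A q : Type)) →ₗ[k] (barC k A q : Type))
  | 0 => - TensorProduct.lift ((LinearMap.lsmul k (barC k A 0 : Type)).comp ε.toLinearMap)
  | (q + 1) =>
    show (A ⊗[k] (A ⊗[k] (barC k A q : Type))) →ₗ[k] (A ⊗[k] (barC k A q : Type)) from
    TensorProduct.lift (LinearMap.mk₂ k
      (fun (a : A) (x : A ⊗[k] (barC k A q : Type)) =>
        -((show A →ₗ[k] ((A ⊗[k] (barC k A q : Type)) →ₗ[k] (A ⊗[k] (barC k A q : Type))) from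
            barAct k A ε (q + 1)) a x) - a ⊗ₜ[k] (barB q x))
      (by intro a b x
          generalize (show A →ₗ[k] ((A ⊗[k] (barC k A q : Type)) →ₗ[k]
            (A ⊗[k] (barC k A q : Type))) from barAct k A ε (q + 1)) = f
          simp only [map_add, LinearMap.add_apply, TensorProduct.add_tmul]
          try abel)
      (by intro c a x
          generalize (show A →ₗ[k] ((A ⊗[k] (barC k A q : Type)) →ₗ[k]
            (A ⊗[k] (barC k A q : Type))) from barAct k A ε (q + 1)) = f
          simp only [map_smul, LinearMap.smul_apply, smul_sub, smul_neg,
            TensorProduct.smul_tmul'])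
      (by intro a x y
          simp only [map_add, LinearMap.map_add, TensorProduct.tmul_add]
          try abel)
      (by intro c a x
          simp only [map_smul, LinearMap.map_smul, TensorProduct.tmul_smul, smul_sub, smul_neg]
          try abel))

/-- The bar differential `C_{q+1} = A ⊗ C_q → C_q`. -/
def bard (q : ℕ) : (A ⊗[k] (barC k A q : Type)) →ₗ[k] (barC k A q : Type) :=
  TensorProduct.lift ((LinearMap.lsmul k (barC k A q : Type)).comp ε.toLinearMap)
  + barB k A ε q

/-- Cycles of the bar complex. -/
def barCycles : ∀ q : ℕ, Submodule k (barC k A q : Type)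
  | 0 => ⊤
  | (q + 1) =>
    show Submodule k (barC k A (q + 1) : Type) from LinearMap.ker (bard k A ε q)

/-- `Tor_q^A(𝟙, 𝟙)`, the homology of the algebra `A` with augmentation (trivial module) `ε`,
computed by the bar complex. -/
def barTor (q : ℕ) : Type :=
  (barCycles k A ε q) ⧸
    (Submodule.comap (barCycles k A ε q).subtype (LinearMap.range (bard k A ε q)))

instance (q : ℕ) : AddCommGroup (barTor k A ε q) :=
  inferInstanceAs (AddCommGroup ((barCycles k A ε q) ⧸
    (Submodule.comap (barCycles k A ε q).subtype (LinearMap.range (bard k A ε q)))))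

instance (q : ℕ) : Module k (barTor k A ε q) :=
  inferInstanceAs (Module k ((barCycles k A ε q) ⧸
    (Submodule.comap (barCycles k A ε q).subtype (LinearMap.range (bard k A ε q)))))

/-- The augmentation of a group algebra `k[G]`, corresponding to the trivial action of `G`
on `k`. -/
def groupAug (G : Type) [Group G] : MonoidAlgebra k G →ₐ[k] k :=
  MonoidAlgebra.lift k k G 1

/-- Group homology `H_*(G; k) = Tor_*^{k[G]}(k, k)` (with the trivial action on `k`). -/
abbrev groupTor (G : Type) [Group G] (q : ℕ) : Type :=
  barTor k (MonoidAlgebra k G) (groupAug k G) q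

section Groups

/-- The action of the symmetric group on `G^n` by permuting the factors. -/
def permMulAut (G : Type) [Group G] (n : ℕ) :
    Equiv.Perm (Fin n) →* MulAut (Fin n → G) where
  toFun σ :=
    { toFun := fun f => f ∘ σ.symm
      invFun := fun f => f ∘ σ
      left_inv := fun f => by funext i; simp
      right_inv := fun f => by funext i; simp
      map_mul' := fun f g => rfl }
  map_one' := by ext f i; rfl
  map_mul' := fun σ τ => by ext f i; rfl

/-- The Artin braid relations, on `m` generators (so for the braid group on `m+1` strands). -/
def braidRels (m : ℕ) : Set (FreeGroup (Fin m)) :=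
  { x | ∃ i j : Fin m,
      ((i : ℕ) + 1 = (j : ℕ) ∧
        x = .of i * .of j * .of i * (.of j * .of i * .of j)⁻¹) ∨
      ((i : ℕ) + 1 < (j : ℕ) ∧
        x = .of i * .of j * (.of j * .of i)⁻¹) }

/-- The braid group `B_n` on `n` strands, presented by the Artin generators
`σ_1, …, σ_{n-1}` and the braid relations. -/
abbrev BraidGroup (n : ℕ) : Type := PresentedGroup (braidRels (n - 1))

private lemma swap_braid {α : Type} [DecidableEq α] (a b c : α)
    (hab : a ≠ b) (hac : a ≠ c) (hbc : b ≠ c) :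
    Equiv.swap a b * Equiv.swap b c * Equiv.swap a b
      = Equiv.swap b c * Equiv.swap a b * Equiv.swap b c := by
  have h1 : Equiv.swap b c * Equiv.swap a b * Equiv.swap b c = Equiv.swap c a :=
    Equiv.swap_mul_swap_mul_swap hab hac
  have h2 : Equiv.swap b a * Equiv.swap c b * Equiv.swap b a = Equiv.swap a c :=
    Equiv.swap_mul_swap_mul_swap hbc.symm hac.symm
  rw [Equiv.swap_comm b a, Equiv.swap_comm c b] at h2
  rw [h1, h2, Equiv.swap_comm]

private lemma swap_swap_comm {α : Type} [DecidableEq α] (a b c d : α)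
    (hac : a ≠ c) (had : a ≠ d) (hbc : b ≠ c) (hbd : b ≠ d) :
    Equiv.swap a b * Equiv.swap c d = Equiv.swap c d * Equiv.swap a b := by
  have h := Equiv.swap_apply_apply (Equiv.swap c d) a b
  rw [Equiv.swap_apply_of_ne_of_ne hac had, Equiv.swap_apply_of_ne_of_ne hbc hbd] at h
  exact eq_mul_inv_iff_mul_eq.mp h

/-- The transpositions which are the images of the braid generators. -/
def braidGen (n : ℕ) (i : Fin (n - 1)) : Equiv.Perm (Fin n) :=
  Equiv.swap ⟨(i : ℕ), by have := i.2; omega⟩ ⟨(i : ℕ) + 1, by have := i.2; omega⟩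

private lemma braidGen_braid (n : ℕ) (i j : Fin (n - 1)) (hij : (i : ℕ) + 1 = (j : ℕ)) :
    braidGen n i * braidGen n j * braidGen n i
      = braidGen n j * braidGen n i * braidGen n j := by
  obtain ⟨i, hi⟩ := i
  obtain ⟨j, hj⟩ := j
  simp only at hij
  subst hij
  unfold braidGen
  exact swap_braid _ _ _ (by simp only [ne_eq, Fin.mk.injEq]; omega)
    (by simp only [ne_eq, Fin.mk.injEq]; omega) (by simp only [ne_eq, Fin.mk.injEq]; omega)

private lemma braidGen_comm (n : ℕ) (i j : Fin (n - 1)) (hij : (i : ℕ) + 1 < (j : ℕ)) :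
    braidGen n i * braidGen n j = braidGen n j * braidGen n i := by
  unfold braidGen
  exact swap_swap_comm _ _ _ _ (by simp only [ne_eq, Fin.mk.injEq]; omega)
    (by simp only [ne_eq, Fin.mk.injEq]; omega) (by simp only [ne_eq, Fin.mk.injEq]; omega)
    (by simp only [ne_eq, Fin.mk.injEq]; omega)

/-- The canonical projection from the braid group to the symmetric group. -/
def braidToPerm (n : ℕ) : BraidGroup n →* Equiv.Perm (Fin n) :=
  PresentedGroup.toGroup (f := braidGen n) (by
    rintro r ⟨i, j, (⟨hij, rfl⟩ | ⟨hij, rfl⟩)⟩ <;>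
      simp only [map_mul, map_inv, FreeGroup.lift_apply_of] <;> rw [mul_inv_eq_one]
    · exact braidGen_braid n i j hij
    · exact braidGen_comm n i j hij)

end Groups

section GRsection

/-! The `G`-equivariant rook algebra `GR_n(ε)`: generators `s i` (transposition of
strands `i, i+1`), `p j` (deleted strand `j`) and `t g j` (identity with strand `j`
labelled `g : G`); a contractible middle component contributes the factor `ε`. -/

inductive GRGen (n : ℕ) (G : Type) : Type
  | s : Fin (n - 1) → GRGen n G
  | p : Fin n → GRGen n G
  | t : G → Fin n → GRGen n G

variable (k G : Type) [CommRing k] [Group G] (n : ℕ) (ε : k)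

abbrev GRs (i : Fin (n - 1)) : FreeAlgebra k (GRGen n G) := FreeAlgebra.ι k (GRGen.s i)
abbrev GRp (j : Fin n) : FreeAlgebra k (GRGen n G) := FreeAlgebra.ι k (GRGen.p j)
abbrev GRt (g : G) (j : Fin n) : FreeAlgebra k (GRGen n G) := FreeAlgebra.ι k (GRGen.t g j)

/-- The diagrammatic relations. -/
inductive GRRel : FreeAlgebra k (GRGen n G) → FreeAlgebra k (GRGen n G) → Prop
  | s_sq (i : Fin (n - 1)) :
      GRRel (GRs k G n i * GRs k G n i) (1)
  | s_braid (i j : Fin (n - 1)) (h : (j : ℕ) = (i : ℕ) + 1) :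
      GRRel (GRs k G n i * GRs k G n j * GRs k G n i) (GRs k G n j * GRs k G n i * GRs k G n j)
  | ss_comm (i j : Fin (n - 1)) (h : (i : ℕ) + 1 < (j : ℕ)) :
      GRRel (GRs k G n i * GRs k G n j) (GRs k G n j * GRs k G n i)
  | p_sq (j : Fin n) :
      GRRel (GRp k G n j * GRp k G n j) (ε • GRp k G n j)
  | pp_comm (j l : Fin n) (h : (j : ℕ) < (l : ℕ)) :
      GRRel (GRp k G n j * GRp k G n l) (GRp k G n l * GRp k G n j)
  | sp_comm (i : Fin (n - 1)) (l : Fin n) (h : (l : ℕ) ≠ (i : ℕ) ∧ (l : ℕ) ≠ (i : ℕ) + 1) :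
      GRRel (GRs k G n i * GRp k G n l) (GRp k G n l * GRs k G n i)
  | sp_slide (i : Fin (n - 1)) (j j' : Fin n) (h : (j : ℕ) = (i : ℕ)) (h' : (j' : ℕ) = (i : ℕ) + 1) :
      GRRel (GRs k G n i * GRp k G n j) (GRp k G n j' * GRs k G n i)
  | sp_slide' (i : Fin (n - 1)) (j j' : Fin n) (h : (j : ℕ) = (i : ℕ)) (h' : (j' : ℕ) = (i : ℕ) + 1) :
      GRRel (GRs k G n i * GRp k G n j') (GRp k G n j * GRs k G n i)
  | psp (i : Fin (n - 1)) (j j' : Fin n) (h : (j : ℕ) = (i : ℕ)) (h' : (j' : ℕ) = (i : ℕ) + 1) :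
      GRRel (GRp k G n j * GRs k G n i * GRp k G n j) (GRp k G n j * GRp k G n j')
  | t_mul (g h' : G) (j : Fin n) :
      GRRel (GRt k G n g j * GRt k G n h' j) (GRt k G n (g * h') j)
  | t_one (j : Fin n) :
      GRRel (GRt k G n 1 j) (1)
  | tt_comm (g h' : G) (j l : Fin n) (h : j ≠ l) :
      GRRel (GRt k G n g j * GRt k G n h' l) (GRt k G n h' l * GRt k G n g j)
  | st_comm (g : G) (i : Fin (n - 1)) (l : Fin n) (h : (l : ℕ) ≠ (i : ℕ) ∧ (l : ℕ) ≠ (i : ℕ) + 1) :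
      GRRel (GRs k G n i * GRt k G n g l) (GRt k G n g l * GRs k G n i)
  | st_slide (g : G) (i : Fin (n - 1)) (j j' : Fin n) (h : (j : ℕ) = (i : ℕ)) (h' : (j' : ℕ) = (i : ℕ) + 1) :
      GRRel (GRs k G n i * GRt k G n g j) (GRt k G n g j' * GRs k G n i)
  | st_slide' (g : G) (i : Fin (n - 1)) (j j' : Fin n) (h : (j : ℕ) = (i : ℕ)) (h' : (j' : ℕ) = (i : ℕ) + 1) :
      GRRel (GRs k G n i * GRt k G n g j') (GRt k G n g j * GRs k G n i)
  | tp_absorb (g : G) (j : Fin n) :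
      GRRel (GRt k G n g j * GRp k G n j) (GRp k G n j)
  | pt_absorb (g : G) (j : Fin n) :
      GRRel (GRp k G n j * GRt k G n g j) (GRp k G n j)
  | tp_comm (g : G) (j l : Fin n) (h : j ≠ l) :
      GRRel (GRt k G n g j * GRp k G n l) (GRp k G n l * GRt k G n g j)

/-- The diagram algebra: the quotient of the free algebra on the diagram generators by
the diagrammatic relations. -/
abbrev GRAlg : Type := RingQuot (GRRel k G n ε)

/-- The augmentation corresponding to the trivial module `𝟙`: a diagram acts by `1`
if it has `n` left-to-right connections, and by `0` otherwise. -/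
noncomputable def GRaug : GRAlg k G n ε →ₐ[k] k :=
  RingQuot.liftAlgHom k ⟨FreeAlgebra.lift k
      (fun x => match x with
        | GRGen.s _ => (1 : k)
        | GRGen.p _ => (0 : k)
        | GRGen.t _ _ => (1 : k)),
    by rintro x y h
       induction h <;>
         simp [GRs, GRp, GRt, FreeAlgebra.lift_ι_apply]⟩

end GRsection

section BarInvariance

section Generic

variable {k : Type} [CommRing k] {A : Type} [Ring A] [Algebra k A]
  {M : Type} [AddCommGroup M] [Module k M]

/-- The recursion step of `barAct`. -/
def rkActS : A →ₗ[k] ((A ⊗[k] M) →ₗ[k] (A ⊗[k] M)) :=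
    { toFun := fun a => TensorProduct.map (LinearMap.mulLeft k a) LinearMap.id
      map_add' := by
        intro a b
        refine TensorProduct.ext' fun x y => ?_
        simp [add_mul, TensorProduct.add_tmul]
      map_smul' := by
        intro c a
        refine TensorProduct.ext' fun x y => ?_
        simp [TensorProduct.smul_tmul'] }

/-- The recursion step of `barB`. -/
def rkB (b : (A ⊗[k] M) →ₗ[k] M) : (A ⊗[k] (A ⊗[k] M)) →ₗ[k] (A ⊗[k] M) :=
    TensorProduct.lift (LinearMap.mk₂ k
      (fun (a : A) (x : A ⊗[k] M) => -(rkActS a x) - a ⊗ₜ[k] (b x))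
      (by intro a c x
          simp only [map_add, LinearMap.add_apply, TensorProduct.add_tmul]
          abel)
      (by intro c a x
          simp only [map_smul, LinearMap.smul_apply, smul_sub, smul_neg,
            TensorProduct.smul_tmul'])
      (by intro a x y
          simp only [map_add, TensorProduct.tmul_add]
          abel)
      (by intro c a x
          simp only [map_smul, TensorProduct.tmul_smul, smul_sub, smul_neg]))

theorem rkActS_tmul (a b : A) (x : M) :
    rkActS a (b ⊗ₜ[k] x) = (a * b) ⊗ₜ[k] x := rfl

theorem rkB_tmul (b : (A ⊗[k] M) →ₗ[k] M) (a : A) (x : A ⊗[k] M) :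
    rkB b (a ⊗ₜ[k] x) = -(rkActS a x) - a ⊗ₜ[k] (b x) := rfl

/-- The recursion step of `bard`. -/
def rkD (ε : A →ₐ[k] k) (b : (A ⊗[k] M) →ₗ[k] M) : (A ⊗[k] M) →ₗ[k] M :=
  TensorProduct.lift ((LinearMap.lsmul k M).comp ε.toLinearMap) + b

theorem rkD_tmul (ε : A →ₐ[k] k) (b : (A ⊗[k] M) →ₗ[k] M) (a : A) (x : M) :
    rkD ε b (a ⊗ₜ[k] x) = ε a • x + b (a ⊗ₜ[k] x) := rfl

/-- The recursion step of the homotopy. -/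
def rkHS (φ : A →ₗ[k] A) (f : A) (m : M →ₗ[k] M) (h : M →ₗ[k] (A ⊗[k] M)) :
    (A ⊗[k] M) →ₗ[k] (A ⊗[k] (A ⊗[k] M)) :=
  (TensorProduct.mk k A (A ⊗[k] M) f) ∘ₗ (TensorProduct.map φ m)
        - TensorProduct.map LinearMap.id h

theorem rkHS_apply (φ : A →ₗ[k] A) (f : A) (m : M →ₗ[k] M) (h : M →ₗ[k] (A ⊗[k] M))
    (x : A ⊗[k] M) :
    rkHS φ f m h x = f ⊗ₜ[k] (TensorProduct.map φ m x) - TensorProduct.map LinearMap.id h x := rfl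

theorem rkB_map {B : Type} [Ring B] [Algebra k B] {N : Type} [AddCommGroup N] [Module k N]
    (φ : A →ₗ[k] B) (hmul : ∀ a b, φ (a * b) = φ a * φ b) (m : M →ₗ[k] N)
    (b : (A ⊗[k] M) →ₗ[k] M) (b' : (B ⊗[k] N) →ₗ[k] N)
    (hb : ∀ x, m (b x) = b' (TensorProduct.map φ m x)) (x : A ⊗[k] (A ⊗[k] M)) :
    TensorProduct.map φ m (rkB b x)
      = rkB b' (TensorProduct.map φ (TensorProduct.map φ m) x) := by
  induction x using TensorProduct.induction_on with
  | zero => simp only [map_zero]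
  | add x y hx hy => simp only [map_add, hx, hy]
  | tmul a x =>
    rw [TensorProduct.map_tmul, rkB_tmul, rkB_tmul, map_sub, map_neg,
      TensorProduct.map_tmul, hb]
    congr 2
    induction x using TensorProduct.induction_on with
    | zero => simp only [map_zero]
    | add x y hx hy => simp only [map_add, hx, hy]
    | tmul b y => simp only [rkActS_tmul, TensorProduct.map_tmul, hmul]

theorem rkD_map {B : Type} [Ring B] [Algebra k B] {N : Type} [AddCommGroup N] [Module k N]
    (ε : A →ₐ[k] k) (η : B →ₐ[k] k)
    (φ : A →ₗ[k] B) (haug : ∀ a, η (φ a) = ε a) (m : M →ₗ[k] N)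
    (b : (A ⊗[k] M) →ₗ[k] M) (b' : (B ⊗[k] N) →ₗ[k] N)
    (hb : ∀ x, m (b x) = b' (TensorProduct.map φ m x)) (x : A ⊗[k] M) :
    m (rkD ε b x) = rkD η b' (TensorProduct.map φ m x) := by
  induction x using TensorProduct.induction_on with
  | zero => simp only [map_zero]
  | add x y hx hy => simp only [map_add, hx, hy]
  | tmul a x =>
    rw [TensorProduct.map_tmul, rkD_tmul, rkD_tmul, map_add, hb, map_smul, haug,
      TensorProduct.map_tmul]

theorem rk_act (φ : A →ₗ[k] A) (f : A) (hφ : ∀ a, φ a = f * a) (hc : ∀ a, a * f = f * a)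
    (m : M →ₗ[k] M) (h : M →ₗ[k] (A ⊗[k] M)) (a : A) (x : A ⊗[k] M) :
    rkActS a (rkHS φ f m h x)
    = rkHS φ f m h (rkActS a x) - f ⊗ₜ[k] (TensorProduct.map φ m (rkActS a x))
      + φ a ⊗ₜ[k] (TensorProduct.map φ m x) := by
  induction x using TensorProduct.induction_on with
  | zero => simp only [map_zero, TensorProduct.tmul_zero, sub_zero, add_zero]
  | add x y hx hy =>
    simp only [map_add, hx, hy, TensorProduct.tmul_add]; abel
  | tmul b y =>
    have h1 : ∀ z : A ⊗[k] M,
        rkActS a (f ⊗ₜ[k] z) = (φ a) ⊗ₜ[k] z := by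
      intro z; rw [rkActS_tmul, hc, hφ]
    have h2 : ∀ z : A ⊗[k] M,
        rkActS a (b ⊗ₜ[k] z) = (a * b) ⊗ₜ[k] z := fun z => rfl
    rw [rkHS_apply, rkHS_apply, map_sub, h1, TensorProduct.map_tmul, TensorProduct.map_tmul,
      LinearMap.id_apply, h2,
      rkActS_tmul, TensorProduct.map_tmul, TensorProduct.map_tmul]
    simp only [LinearMap.id_apply]
    abel

theorem rk_bh (φ : A →ₗ[k] A) (f : A) (hff : f * f = f) (hφ : ∀ a, φ a = f * a)
    (hc : ∀ a, a * f = f * a) (hmul : ∀ a b, φ (a * b) = φ a * φ b)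
    (m : M →ₗ[k] M) (h : M →ₗ[k] (A ⊗[k] M)) (b : (A ⊗[k] M) →ₗ[k] M)
    (hb : ∀ x, m (b x) = b (TensorProduct.map φ m x))
    (ih : ∀ y, rkB b (rkHS φ f m h y) + h (b y) = - y)
    (y : A ⊗[k] (A ⊗[k] M)) :
    rkB (rkB b) (rkHS φ f (TensorProduct.map φ m) (rkHS φ f m h) y)
      + rkHS φ f m h (rkB b y) = - y := by
  have hact : ∀ z : A ⊗[k] (A ⊗[k] M),
      rkActS f (TensorProduct.map φ (TensorProduct.map φ m) z) =
        TensorProduct.map φ (TensorProduct.map φ m) z := by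
    intro z
    induction z using TensorProduct.induction_on with
    | zero => simp only [map_zero]
    | add x y hx hy => simp only [map_add, hx, hy]
    | tmul b y =>
      rw [TensorProduct.map_tmul, rkActS_tmul, hφ, ← mul_assoc, hff]
  induction y using TensorProduct.induction_on with
  | zero => simp only [map_zero, add_zero, neg_zero]
  | add x y hx hy =>
    rw [map_add, map_add, map_add, map_add, neg_add, ← hx, ← hy]; abel
  | tmul a x =>
    rw [rkHS_apply, map_sub, rkB_tmul, hact, ← rkB_map φ hmul m b b hb,
      TensorProduct.map_tmul, TensorProduct.map_tmul, rkB_tmul, rkB_tmul, map_sub, map_neg,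
      rk_act φ f hφ hc, map_sub, map_neg, TensorProduct.map_tmul, hb]
    rw [rkHS_apply φ f m h (a ⊗ₜ[k] b x), TensorProduct.map_tmul, TensorProduct.map_tmul,
      eq_sub_of_add_eq (ih x), hb]
    simp only [TensorProduct.tmul_sub, TensorProduct.tmul_neg, LinearMap.id_apply]
    abel

theorem rk_dh (ε : A →ₐ[k] k) (φ : A →ₗ[k] A) (f : A) (hf : ε f = 1)
    (m : M →ₗ[k] M) (h : M →ₗ[k] (A ⊗[k] M)) (b : (A ⊗[k] M) →ₗ[k] M)
    (ih : ∀ y, rkB b (rkHS φ f m h y) + h (b y) = - y) (y : A ⊗[k] M) :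
    rkD ε (rkB b) (rkHS φ f m h y) + h (rkD ε b y) = TensorProduct.map φ m y - y := by
  induction y using TensorProduct.induction_on with
  | zero => simp only [map_zero, add_zero, sub_zero]
  | add x y hx hy =>
    rw [map_add, map_add, map_add, map_add, map_add, add_sub_add_comm, ← hx, ← hy]; abel
  | tmul a x =>
    have := ih (a ⊗ₜ[k] x)
    rw [sub_eq_add_neg, ← this, rkHS_apply, map_sub, map_sub, rkD_tmul, TensorProduct.map_tmul,
      TensorProduct.map_tmul, rkD_tmul, rkD_tmul, hf, map_add, map_smul, one_smul]
    simp only [LinearMap.id_apply]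
    abel

theorem rk_map_comp {B C : Type} [Ring B] [Algebra k B] [Ring C] [Algebra k C]
    (ψ : B →ₗ[k] C) (φ : A →ₗ[k] B) {N P : Type} [AddCommGroup N] [Module k N]
    [AddCommGroup P] [Module k P] (m : M →ₗ[k] N) (p : N →ₗ[k] P) (r : M →ₗ[k] P)
    (hr : ∀ x, p (m x) = r x) (χ : A →ₗ[k] C) (hχ : ∀ x, ψ (φ x) = χ x) (x : A ⊗[k] M) :
    TensorProduct.map ψ p (TensorProduct.map φ m x) = TensorProduct.map χ r x := by
  induction x using TensorProduct.induction_on with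
  | zero => simp only [map_zero]
  | add x y hx hy => simp only [map_add, hx, hy]
  | tmul a x => simp only [TensorProduct.map_tmul, hr, hχ]

theorem rk_quot {X Y : Type} [AddCommGroup X] [Module k X] [AddCommGroup Y] [Module k Y]
    (Z B : Submodule k X) (Z' B' : Submodule k Y) (F : X →ₗ[k] Y) (J : Y →ₗ[k] X)
    (hFZ : ∀ x ∈ Z, F x ∈ Z') (hFB : ∀ x ∈ B, F x ∈ B')
    (hJZ : ∀ x ∈ Z', J x ∈ Z) (hJB : ∀ x ∈ B', J x ∈ B)
    (hFJ : ∀ y, F (J y) = y) (hJF : ∀ x ∈ Z, J (F x) - x ∈ B) :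
    Nonempty ((Z ⧸ (B.comap Z.subtype)) ≃ₗ[k] (Z' ⧸ (B'.comap Z'.subtype))) := by
  have h1 : (B.comap Z.subtype) ≤ (B'.comap Z'.subtype).comap (F.restrict hFZ) :=
    fun x hx => hFB _ hx
  have h2 : (B'.comap Z'.subtype) ≤ (B.comap Z.subtype).comap (J.restrict hJZ) :=
    fun x hx => hJB _ hx
  refine ⟨LinearEquiv.ofLinearMap
    (Submodule.mapQ _ _ (F.restrict hFZ) h1) (Submodule.mapQ _ _ (J.restrict hJZ) h2) ?_ ?_⟩
  · apply LinearMap.ext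
    intro y
    obtain ⟨⟨x, hx⟩, rfl⟩ := Submodule.Quotient.mk_surjective _ y
    rw [LinearMap.comp_apply, Submodule.mapQ_apply, Submodule.mapQ_apply, LinearMap.id_apply]
    congr 1
    exact Subtype.ext (hFJ x)
  · apply LinearMap.ext
    intro y
    obtain ⟨⟨x, hx⟩, rfl⟩ := Submodule.Quotient.mk_surjective _ y
    rw [LinearMap.comp_apply, Submodule.mapQ_apply, Submodule.mapQ_apply, LinearMap.id_apply,
      Submodule.Quotient.eq]
    exact hJF x hx

theorem rk_bh_base (ε : A →ₐ[k] k) (φ : A →ₗ[k] A) (f : A) (hf : ε f = 1) (hff : f * f = f)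
    (hφ : ∀ a, φ a = f * a) (hc : ∀ a, a * f = f * a) (haug : ∀ a, ε (φ a) = ε a)
    (m : M →ₗ[k] M) (hm : ∀ x, m x = x) (h : M →ₗ[k] (A ⊗[k] M)) (hh : ∀ x, h x = f ⊗ₜ[k] x)
    (b : (A ⊗[k] M) →ₗ[k] M) (hb : ∀ a x, b (a ⊗ₜ[k] x) = -(ε a • x)) (y : A ⊗[k] M) :
    rkB b (rkHS φ f m h y) + h (b y) = - y := by
  induction y using TensorProduct.induction_on with
  | zero => simp only [map_zero, add_zero, neg_zero]
  | add x y hx hy =>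
    rw [map_add, map_add, map_add, map_add, neg_add, ← hx, ← hy]; abel
  | tmul a x =>
    rw [rkHS_apply, map_sub, TensorProduct.map_tmul, TensorProduct.map_tmul, LinearMap.id_apply,
      rkB_tmul, rkB_tmul, hm, hh, hh, hb, hb, hb, haug, hf, rkActS_tmul, rkActS_tmul, hc, hφ,
      ← mul_assoc, hff, one_smul, TensorProduct.tmul_neg, TensorProduct.tmul_neg]
    abel

end Generic

/-- The map of bar complexes induced by a linear map. -/
def rkMap {k : Type} [CommRing k] {A B : Type} [Ring A] [Algebra k A] [Ring B] [Algebra k B]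
    (φ : A →ₗ[k] B) : ∀ q : ℕ, (barC k A q : Type) →ₗ[k] (barC k B q : Type)
  | 0 => (LinearMap.id : k →ₗ[k] k)
  | (q + 1) =>
    show (A ⊗[k] (barC k A q : Type)) →ₗ[k] (B ⊗[k] (barC k B q : Type)) from
      TensorProduct.map φ (rkMap φ q)

/-- The homotopy. -/
def rkH {k : Type} [CommRing k] {A : Type} [Ring A] [Algebra k A]
    (φ : A →ₗ[k] A) (f : A) : ∀ q : ℕ, (barC k A q : Type) →ₗ[k] (A ⊗[k] (barC k A q : Type))
  | 0 => TensorProduct.mk k A (barC k A 0 : Type) f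
  | (q + 1) =>
    show (A ⊗[k] (barC k A q : Type)) →ₗ[k] (A ⊗[k] (A ⊗[k] (barC k A q : Type))) from
      rkHS φ f (rkMap φ q) (rkH φ f q)

theorem rkMap_barB {k : Type} [CommRing k] {A B : Type} [Ring A] [Algebra k A] [Ring B]
    [Algebra k B] (ε : A →ₐ[k] k) (η : B →ₐ[k] k) (φ : A →ₗ[k] B)
    (hmul : ∀ a b, φ (a * b) = φ a * φ b) (haug : ∀ a, η (φ a) = ε a) (q : ℕ) :
    ∀ x : A ⊗[k] (barC k A q : Type),
    rkMap φ q (barB k A ε q x) = barB k B η q (TensorProduct.map φ (rkMap φ q) x) := by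
  induction q with
  | zero =>
    intro x
    induction x using TensorProduct.induction_on with
    | zero => simp only [map_zero]
    | add x y hx hy => simp only [map_add, hx, hy]
    | tmul a c =>
      change k at c
      change -(ε a * c) = -(η (φ a) * c)
      rw [haug]
  | succ q ih => exact rkB_map φ hmul (rkMap φ q) (barB k A ε q) (barB k B η q) ih

theorem rkMap_bard {k : Type} [CommRing k] {A B : Type} [Ring A] [Algebra k A] [Ring B]
    [Algebra k B] (ε : A →ₐ[k] k) (η : B →ₐ[k] k) (φ : A →ₗ[k] B)
    (hmul : ∀ a b, φ (a * b) = φ a * φ b) (haug : ∀ a, η (φ a) = ε a) (q : ℕ)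
    (x : A ⊗[k] (barC k A q : Type)) :
    rkMap φ q (bard k A ε q x) = bard k B η q (TensorProduct.map φ (rkMap φ q) x) :=
  rkD_map ε η φ haug (rkMap φ q) (barB k A ε q) (barB k B η q)
    (rkMap_barB ε η φ hmul haug q) x

theorem rkMap_comp {k : Type} [CommRing k] {A B C : Type} [Ring A] [Algebra k A] [Ring B]
    [Algebra k B] [Ring C] [Algebra k C] (ψ : B →ₗ[k] C) (φ : A →ₗ[k] B) (χ : A →ₗ[k] C)
    (hχ : ∀ x, ψ (φ x) = χ x) (q : ℕ) :
    ∀ x : (barC k A q : Type), rkMap ψ q (rkMap φ q x) = rkMap χ q x := by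
  induction q with
  | zero => intro x; rfl
  | succ q ih => exact rk_map_comp ψ φ _ _ _ ih χ hχ

theorem rkMap_id {k : Type} [CommRing k] {A : Type} [Ring A] [Algebra k A] (q : ℕ) :
    (rkMap (LinearMap.id : A →ₗ[k] A) q) = LinearMap.id := by
  induction q with
  | zero => rfl
  | succ q ih =>
    change TensorProduct.map LinearMap.id (rkMap LinearMap.id q) = _
    rw [ih, TensorProduct.map_id]; rfl

theorem rkH_b {k : Type} [CommRing k] {A : Type} [Ring A] [Algebra k A] (ε : A →ₐ[k] k)
    (φ : A →ₗ[k] A) (f : A) (hf : ε f = 1) (hff : f * f = f) (hφ : ∀ a, φ a = f * a)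
    (hc : ∀ a, a * f = f * a) (hmul : ∀ a b, φ (a * b) = φ a * φ b)
    (haug : ∀ a, ε (φ a) = ε a) (q : ℕ) :
    ∀ y : A ⊗[k] (barC k A q : Type),
    rkB (barB k A ε q) (rkHS φ f (rkMap φ q) (rkH φ f q) y) + rkH φ f q (barB k A ε q y) = -y := by
  induction q with
  | zero =>
    exact rk_bh_base ε φ f hf hff hφ hc haug (rkMap φ 0) (fun _ => rfl) (rkH φ f 0)
      (fun _ => rfl) (barB k A ε 0) (fun _ _ => rfl)
  | succ q ih =>
    exact rk_bh φ f hff hφ hc hmul (rkMap φ q) (rkH φ f q) (barB k A ε q)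
      (rkMap_barB ε ε φ hmul haug q) ih

theorem rk_barTor {k : Type} [CommRing k] {A R : Type} [Ring A] [Algebra k A] [Ring R]
    [Algebra k R] (ε : A →ₐ[k] k) (η : R →ₐ[k] k) (π : A →ₗ[k] R) (ι : R →ₗ[k] A) (f : A)
    (hπ : ∀ a b, π (a * b) = π a * π b) (hπε : ∀ a, η (π a) = ε a)
    (hι : ∀ a b, ι (a * b) = ι a * ι b) (hιε : ∀ a, ε (ι a) = η a)
    (hπι : ∀ r, π (ι r) = r) (hιπ : ∀ a, ι (π a) = f * a)
    (hf : ε f = 1) (hff : f * f = f) (hc : ∀ a, a * f = f * a) (q : ℕ) :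
    Nonempty (barTor k A ε q ≃ₗ[k] barTor k R η q) := by
  have hdπ := rkMap_bard ε η π hπ hπε
  have hdι := rkMap_bard η ε ι hι hιε
  have hZπ : ∀ x ∈ barCycles k A ε q, rkMap π q x ∈ barCycles k R η q := by
    cases q with
    | zero => intro x _; exact Submodule.mem_top
    | succ q =>
      intro x hx
      change bard k A ε q x = 0 at hx
      exact (hdπ q x).symm.trans ((congrArg (rkMap π q) hx).trans (map_zero _))
  have hZι : ∀ x ∈ barCycles k R η q, rkMap ι q x ∈ barCycles k A ε q := by
    cases q with
    | zero => intro x _; exact Submodule.mem_top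
    | succ q =>
      intro x hx
      change bard k R η q x = 0 at hx
      exact (hdι q x).symm.trans ((congrArg (rkMap ι q) hx).trans (map_zero _))
  refine rk_quot (barCycles k A ε q) (LinearMap.range (bard k A ε q)) (barCycles k R η q)
    (LinearMap.range (bard k R η q)) (rkMap π q) (rkMap ι q) hZπ ?_ hZι ?_ ?_ ?_
  · rintro _ ⟨x, rfl⟩
    exact ⟨_, (hdπ q x).symm⟩
  · rintro _ ⟨x, rfl⟩
    exact ⟨_, (hdι q x).symm⟩
  · intro y
    rw [rkMap_comp π ι LinearMap.id hπι, rkMap_id]; rfl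
  · have hφ : ∀ a, (ι ∘ₗ π) a = f * a := hιπ
    intro x hx
    rw [rkMap_comp ι π (ι ∘ₗ π) (fun _ => rfl)]
    have hmul : ∀ a b, (ι ∘ₗ π) (a * b) = (ι ∘ₗ π) a * (ι ∘ₗ π) b := by
      intro a b; simp only [LinearMap.comp_apply, hπ, hι]
    have haug : ∀ a, ε ((ι ∘ₗ π) a) = ε a := by
      intro a; simp only [LinearMap.comp_apply, hπε, hιε]
    cases q with
    | zero =>
      change rkMap (ι ∘ₗ π) 0 x - x ∈ _
      have : rkMap (ι ∘ₗ π) 0 x = x := rfl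
      rw [this, sub_self]; exact Submodule.zero_mem _
    | succ q =>
      have key := rk_dh ε (ι ∘ₗ π) f hf (rkMap (ι ∘ₗ π) q) (rkH (ι ∘ₗ π) f q) (barB k A ε q)
        (rkH_b ε (ι ∘ₗ π) f hf hff hφ hc hmul haug q) x
      change bard k A ε q x = 0 at hx
      have hx' : rkD ε (barB k A ε q) x = 0 := hx
      rw [hx', map_zero, add_zero] at key
      exact ⟨_, key⟩

end BarInvariance

section SymPresentation

/-- The descending product `x_{j+l-1} ⋯ x_j`. -/
def rkDesc {N : Type} [Monoid N] (x : ℕ → N) (j : ℕ) : ℕ → N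
  | 0 => 1
  | (l + 1) => x (j + l) * rkDesc x j l

/-- `rkDesc` unfolded at the right end. -/
theorem rkDesc_right {N : Type} [Monoid N] (x : ℕ → N) (j l : ℕ) :
    rkDesc x j (l + 1) = rkDesc x (j + 1) l * x j := by
  induction l with
  | zero => simp [rkDesc]
  | succ l ih =>
    rw [rkDesc, ih, rkDesc, mul_assoc, show j + 1 + l = j + (l + 1) by omega]

/-- Far-away generators commute. -/
theorem rkDesc_comm {N : Type} [Monoid N] (x : ℕ → N) (L : ℕ)
    (hcomm : ∀ i j, i + 1 < j → j < L → x i * x j = x j * x i)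
    (j l i : ℕ) (hL : j + l ≤ L) (hi : i < L) (h : i + 1 < j ∨ j + l < i + 1 ∧ j + l ≠ i + 0) :
    rkDesc x j l * x i = x i * rkDesc x j l := by
  induction l with
  | zero => simp [rkDesc]
  | succ l ih =>
    rw [rkDesc, mul_assoc, ih (by omega) (by omega), ← mul_assoc, ← mul_assoc]
    congr 1
    rcases h with h | h
    · exact (hcomm i (j + l) (by omega) (by omega)).symm
    · exact hcomm (j + l) i (by omega) (by omega)

theorem rkDesc_braid {N : Type} [Monoid N] (x : ℕ → N) (L : ℕ)
    (hcomm : ∀ i j, i + 1 < j → j < L → x i * x j = x j * x i)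
    (hbraid : ∀ i, i + 1 < L → x i * x (i + 1) * x i = x (i + 1) * x i * x (i + 1))
    (j l i : ℕ) (hL : j + l ≤ L) (hji : j ≤ i) (hi : i + 1 < j + l) :
    rkDesc x j l * x (i + 1) = x i * rkDesc x j l := by
  induction l with
  | zero => omega
  | succ l ih =>
    by_cases h : i + 1 < j + l
    · rw [rkDesc, mul_assoc, ih (by omega) h, ← mul_assoc, ← mul_assoc,
        hcomm i (j + l) (by omega) (by omega)]
    · obtain ⟨l, rfl⟩ : ∃ l', l = l' + 1 := ⟨l - 1, by omega⟩
      obtain rfl : i = j + l := by omega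
      rw [rkDesc, rkDesc, mul_assoc, mul_assoc,
        rkDesc_comm x L hcomm j l (j + l + 1) (by omega) (by omega) (Or.inr (by omega)),
        show j + (l + 1) = j + l + 1 by omega, ← mul_assoc, ← mul_assoc, ← hbraid _ (by omega)]
      simp only [mul_assoc]

/-- The submonoid generated by `x_i`, `i < m`. -/
def rkSub {N : Type} [Monoid N] (x : ℕ → N) (m : ℕ) : Submonoid N :=
  Submonoid.closure {y | ∃ i < m, y = x i}

theorem rkSub_mem {N : Type} [Monoid N] (x : ℕ → N) {m i : ℕ} (h : i < m) :
    x i ∈ rkSub x m := Submonoid.subset_closure ⟨i, h, rfl⟩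

theorem rkSub_normal {N : Type} [Monoid N] (x : ℕ → N) (L : ℕ)
    (hsq : ∀ i, i < L → x i * x i = 1)
    (hcomm : ∀ i j, i + 1 < j → j < L → x i * x j = x j * x i)
    (hbraid : ∀ i, i + 1 < L → x i * x (i + 1) * x i = x (i + 1) * x i * x (i + 1))
    (m : ℕ) (hm : m < L) (h : N) (hh : h ∈ rkSub x (m + 1)) :
    ∃ w ∈ rkSub x m, ∃ j l, j + l = m + 1 ∧ h = w * rkDesc x j l := by
  induction hh using Submonoid.closure_induction_right with
  | one => exact ⟨1, one_mem _, m + 1, 0, rfl, by simp [rkDesc]⟩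
  | mul_right y _ z hz ih =>
    obtain ⟨i, hi, rfl⟩ := hz
    obtain ⟨w, hw, j, l, hjl, rfl⟩ := ih
    rcases lt_trichotomy i j with hij | hij | hij
    · by_cases hij' : i + 1 = j
      · subst hij'
        exact ⟨w, hw, i, l + 1, by omega, by rw [rkDesc_right, mul_assoc]⟩
      · refine ⟨w * x i, mul_mem hw (rkSub_mem x (by omega)), j, l, hjl, ?_⟩
        rw [mul_assoc, rkDesc_comm x L hcomm j l i (by omega) (by omega) (Or.inl (by omega)),
          mul_assoc]
    · subst hij
      obtain ⟨l, rfl⟩ : ∃ l', l = l' + 1 := ⟨l - 1, by omega⟩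
      exact ⟨w, hw, i + 1, l, by omega, by
        rw [rkDesc_right, mul_assoc, mul_assoc, hsq i (by omega), mul_one]⟩
    · obtain ⟨i, rfl⟩ : ∃ i', i = i' + 1 := ⟨i - 1, by omega⟩
      refine ⟨w * x i, mul_mem hw (rkSub_mem x (by omega)), j, l, hjl, ?_⟩
      rw [mul_assoc, rkDesc_braid x L hcomm hbraid j l i (by omega) (by omega) (by omega),
          mul_assoc]

theorem rkSub_fix {N : Type} [Monoid N] (x : ℕ → N) (n : ℕ) (π : N →* Equiv.Perm (Fin n))
    (hπ : ∀ i (h : i + 1 < n), π (x i) = Equiv.swap ⟨i, by omega⟩ ⟨i + 1, h⟩)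
    (m : ℕ) (hm : m < n) (h : N) (hh : h ∈ rkSub x m) (t : Fin n) (ht : m < (t : ℕ)) :
    π h t = t := by
  induction hh using Submonoid.closure_induction with
  | mem y hy =>
    obtain ⟨i, hi, rfl⟩ := hy
    rw [hπ i (by omega)]
    apply Equiv.swap_apply_of_ne_of_ne <;> (rw [Ne, Fin.ext_iff]; simp only; omega)
  | one => simp
  | mul a b _ _ ha hb => rw [map_mul, Equiv.Perm.mul_apply, hb, ha]

theorem rkDesc_apply {N : Type} [Monoid N] (x : ℕ → N) (n : ℕ) (π : N →* Equiv.Perm (Fin n))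
    (hπ : ∀ i (h : i + 1 < n), π (x i) = Equiv.swap ⟨i, by omega⟩ ⟨i + 1, h⟩)
    (j l : ℕ) (h : j + l < n) : π (rkDesc x j l) ⟨j, by omega⟩ = ⟨j + l, h⟩ := by
  induction l with
  | zero => simp [rkDesc]
  | succ l ih =>
    rw [rkDesc, map_mul, Equiv.Perm.mul_apply, ih (by omega), hπ _ (by omega),
      Equiv.swap_apply_left]
    rfl

theorem rkSub_ker {N : Type} [Monoid N] (x : ℕ → N) (n : ℕ) (π : N →* Equiv.Perm (Fin n))
    (hπ : ∀ i (h : i + 1 < n), π (x i) = Equiv.swap ⟨i, by omega⟩ ⟨i + 1, h⟩)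
    (hsq : ∀ i, i < n - 1 → x i * x i = 1)
    (hcomm : ∀ i j, i + 1 < j → j < n - 1 → x i * x j = x j * x i)
    (hbraid : ∀ i, i + 1 < n - 1 → x i * x (i + 1) * x i = x (i + 1) * x i * x (i + 1))
    (m : ℕ) (hm : m ≤ n - 1) : ∀ h ∈ rkSub x m, π h = 1 → h = 1 := by
  induction m with
  | zero =>
    intro h hh _
    have : ({y | ∃ i < 0, y = x i} : Set N) = ∅ := by ext; simp
    rw [rkSub, this, Submonoid.closure_empty] at hh
    exact Submonoid.mem_bot.1 hh
  | succ m ih =>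
    intro h hh h1
    obtain ⟨w, hw, j, l, hjl, rfl⟩ :=
      rkSub_normal x (n - 1) hsq hcomm hbraid m (by omega) h hh
    have e : π (w * rkDesc x j l) ⟨j, by omega⟩ = ⟨m + 1, by omega⟩ := by
      rw [map_mul, Equiv.Perm.mul_apply, rkDesc_apply x n π hπ j l (by omega)]
      rw [rkSub_fix x n π hπ m (by omega) w hw _ (by simp only; omega)]
      exact Fin.ext hjl
    rw [h1, Equiv.Perm.one_apply, Fin.mk.injEq] at e
    obtain rfl : l = 0 := by omega
    rw [rkDesc, mul_one] at h1 ⊢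
    exact ih (by omega) w hw h1

theorem rk_closure (n : ℕ) : Submonoid.closure (Set.range (braidGen n)) = ⊤ := by
  cases n with
  | zero => exact Subsingleton.elim _ _
  | succ n => exact Equiv.Perm.mclosure_swap_castSucc_succ n

theorem rk_exists_hom {M : Type} [Monoid M] (n : ℕ) (s : Fin (n - 1) → M)
    (hsq : ∀ i, s i * s i = 1)
    (hcomm : ∀ i j : Fin (n - 1), (i : ℕ) + 1 < j → s i * s j = s j * s i)
    (hbraid : ∀ i j : Fin (n - 1), (j : ℕ) = i + 1 → s i * s j * s i = s j * s i * s j) :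
    ∃ Φ : Equiv.Perm (Fin n) →* M, ∀ i, Φ (braidGen n i) = s i := by
  classical
  let x : ℕ → M × Equiv.Perm (Fin n) := fun i =>
    if h : i < n - 1 then (s ⟨i, h⟩, braidGen n ⟨i, h⟩) else 1
  have hx : ∀ i (h : i < n - 1), x i = (s ⟨i, h⟩, braidGen n ⟨i, h⟩) := fun i h => dif_pos h
  let π : M × Equiv.Perm (Fin n) →* Equiv.Perm (Fin n) := MonoidHom.snd _ _
  have hker := rkSub_ker x n π
    (by intro i h; rw [hx i (by omega)]; rfl)
    (by
      intro i h
      rw [hx i h, Prod.mk_mul_mk, hsq]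
      exact Prod.ext rfl (Equiv.swap_mul_self _ _))
    (by
      intro i j hij hj
      rw [hx i (by omega), hx j hj, Prod.mk_mul_mk, Prod.mk_mul_mk, hcomm _ _ hij,
        braidGen_comm n _ _ hij])
    (by
      intro i hi
      rw [hx i (by omega), hx (i + 1) hi]
      simp only [Prod.mk_mul_mk]
      rw [hbraid _ _ rfl, braidGen_braid n _ _ rfl])
    (n - 1) le_rfl
  have hex : ∀ σ : Equiv.Perm (Fin n), ∃ a, (a, σ) ∈ rkSub x (n - 1) := by
    intro σ
    have : σ ∈ Submonoid.closure (Set.range (braidGen n)) := by rw [rk_closure]; trivial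
    induction this using Submonoid.closure_induction with
    | mem y hy =>
      obtain ⟨i, rfl⟩ := hy
      refine ⟨s i, ?_⟩
      have := rkSub_mem x i.2
      rwa [hx _ i.2] at this
    | one => exact ⟨1, one_mem _⟩
    | mul a b _ _ ha hb =>
      obtain ⟨a', ha⟩ := ha
      obtain ⟨b', hb⟩ := hb
      exact ⟨a' * b', mul_mem ha hb⟩
  have huniq : ∀ σ a b, (a, σ) ∈ rkSub x (n - 1) → (b, σ) ∈ rkSub x (n - 1) → a = b := by
    intro σ a b ha hb
    obtain ⟨c, hc⟩ := hex σ⁻¹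
    have h1 : a * c = 1 :=
      congrArg Prod.fst (hker _ (mul_mem ha hc) (mul_inv_cancel σ))
    have h2 : c * b = 1 :=
      congrArg Prod.fst (hker _ (mul_mem hc hb) (inv_mul_cancel σ))
    calc a = a * (c * b) := by rw [h2, mul_one]
      _ = b := by rw [← mul_assoc, h1, one_mul]
  choose Φ hΦ using hex
  refine ⟨⟨⟨Φ, huniq 1 _ _ (hΦ 1) (one_mem _)⟩, fun σ τ =>
    huniq _ _ _ (hΦ _) (mul_mem (hΦ σ) (hΦ τ))⟩, fun i => ?_⟩
  refine huniq _ _ _ (hΦ _) ?_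
  have := rkSub_mem x i.2
  rwa [hx _ i.2] at this

end SymPresentation

section RookAlgebra

theorem rk_wreath {M G : Type} [Monoid M] [Group G] (n : ℕ) (s : Fin (n - 1) → M)
    (t : G → Fin n → M)
    (hsq : ∀ i, s i * s i = 1)
    (hcomm : ∀ i j : Fin (n - 1), (i : ℕ) + 1 < j → s i * s j = s j * s i)
    (hbraid : ∀ i j : Fin (n - 1), (j : ℕ) = i + 1 → s i * s j * s i = s j * s i * s j)
    (ht1 : ∀ j, t 1 j = 1) (htm : ∀ g h j, t (g * h) j = t g j * t h j)
    (htt : ∀ g h j l, j ≠ l → t g j * t h l = t h l * t g j)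
    (hst : ∀ g i j, s i * t g j = t g (braidGen n i j) * s i) :
    ∃ Θ : ((Fin n → G) ⋊[permMulAut G n] Equiv.Perm (Fin n)) →* M,
      (∀ i, Θ (SemidirectProduct.inr (braidGen n i)) = s i) ∧
      (∀ g j, Θ (SemidirectProduct.inl (Pi.mulSingle j g)) = t g j) := by
  obtain ⟨Φ, hΦ⟩ := rk_exists_hom n s hsq hcomm hbraid
  let τ : Fin n → G →* M := fun j => ⟨⟨fun g => t g j, ht1 j⟩, fun g h => htm g h j⟩
  have hτ : Pairwise fun i j => ∀ x y, Commute (τ i x) (τ j y) :=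
    fun i j hij x y => htt x y i j hij
  let T : (Fin n → G) →* Mˣ := (MonoidHom.noncommPiCoprod τ hτ).toHomUnits
  have hT : ∀ j g, ((T (Pi.mulSingle j g) : Mˣ) : M) = t g j := by
    intro j g
    rw [MonoidHom.coe_toHomUnits]
    exact MonoidHom.noncommPiCoprod_mulSingle (N := fun _ => G) τ (hcomm := hτ) j g
  let F : Equiv.Perm (Fin n) →* Mˣ := Φ.toHomUnits
  have hF : ∀ i, ((F (braidGen n i) : Mˣ) : M) = s i := hΦ
  have hcompat : ∀ σ : Equiv.Perm (Fin n), ∀ j g,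
      T (Pi.mulSingle (σ j) g) = F σ * T (Pi.mulSingle j g) * (F σ)⁻¹ := by
    intro σ
    have : σ ∈ Submonoid.closure (Set.range (braidGen n)) := by rw [rk_closure]; trivial
    induction this using Submonoid.closure_induction with
    | mem y hy =>
      obtain ⟨i, rfl⟩ := hy
      intro j g
      rw [eq_mul_inv_iff_mul_eq]
      apply Units.ext
      rw [Units.val_mul, Units.val_mul, hT, hT, hF, hst]
    | one => intro j g; simp
    | mul a b _ _ ha hb =>
      intro j g
      rw [Equiv.Perm.mul_apply, ha, hb, map_mul]
      group
  have hsingle : ∀ (σ : Equiv.Perm (Fin n)) (j : Fin n) (g : G),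
      permMulAut G n σ (Pi.mulSingle j g) = Pi.mulSingle (σ j) g := by
    intro σ j g
    exact Pi.mulSingle_comp_equiv σ.symm j g
  refine ⟨(Units.coeHom M).comp (SemidirectProduct.lift T F ?_), ?_, ?_⟩
  · intro σ
    apply MonoidHom.pi_ext
    intro j g
    change T (permMulAut G n σ (Pi.mulSingle j g)) = F σ * T (Pi.mulSingle j g) * (F σ)⁻¹
    rw [hsingle, hcompat]
  · intro i
    rw [MonoidHom.comp_apply, SemidirectProduct.lift_inr]
    exact hF i
  · intro g j
    rw [MonoidHom.comp_apply, SemidirectProduct.lift_inl]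
    exact hT j g

theorem rk_idem {k A R : Type} [CommRing k] [Ring A] [Ring R] {ι : Type} (e : ι → A)
    (hcomm : ∀ i j, e i * e j = e j * e i) (hid : ∀ i, e i * e i = e i)
    (g : A →+* R) (hg : ∀ i, g (e i) = 0) (l : List ι) :
    ∃ f : A, (∀ j ∈ l, f * e j = 0 ∧ e j * f = 0) ∧
      (∀ x, (∀ j ∈ l, x * e j = 0) → x * f = x) ∧
      (∀ x, (∀ j ∈ l, e j * x = 0) → f * x = x) ∧
      (∀ j, e j * f = f * e j) ∧ g f = 1 := by
  induction l with
  | nil => exact ⟨1, by simp⟩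
  | cons a l ih =>
    obtain ⟨f, h1, h2, h3, h4, h5⟩ := ih
    refine ⟨(1 - e a) * f, ?_, ?_, ?_, ?_, ?_⟩
    · intro j hj
      rcases List.mem_cons.1 hj with rfl | hj
      · constructor
        · rw [mul_assoc, ← h4, ← mul_assoc, sub_mul, one_mul, hid, sub_self, zero_mul]
        · rw [← mul_assoc, mul_sub, mul_one, hid, sub_self, zero_mul]
      · constructor
        · rw [mul_assoc, (h1 j hj).1, mul_zero]
        · rw [← mul_assoc, mul_sub, mul_one, hcomm, sub_mul, mul_assoc, (h1 j hj).2, mul_zero,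
            sub_zero]
    · intro x hx
      rw [← mul_assoc, mul_sub, mul_one, hx a List.mem_cons_self, sub_zero]
      exact h2 x fun j hj => hx j (List.mem_cons_of_mem _ hj)
    · intro x hx
      rw [mul_assoc, h3 x fun j hj => hx j (List.mem_cons_of_mem _ hj), sub_mul, one_mul,
        hx a List.mem_cons_self, sub_zero]
    · intro j
      rw [← mul_assoc, mul_sub, mul_one, hcomm, mul_assoc, ← h4]
      noncomm_ring
    · rw [map_mul, h5, map_sub, map_one, hg, sub_zero, mul_one]

variable (k G : Type) [CommRing k] [Group G] (n : ℕ) (ε : k)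

theorem braidGen_left (i : Fin (n - 1)) (j j' : Fin n) (h : (j : ℕ) = i) (h' : (j' : ℕ) = i + 1) :
    braidGen n i j = j' := by
  have hi : (i : ℕ) < n := by have := i.2; clear h h'; omega
  have hi' : (i : ℕ) + 1 < n := by have := i.2; clear h h'; omega
  have e1 : j = ⟨i, hi⟩ := Fin.ext h
  have e2 : j' = ⟨i + 1, hi'⟩ := Fin.ext h'
  rw [e1, e2]
  exact Equiv.swap_apply_left _ _

theorem braidGen_right (i : Fin (n - 1)) (j j' : Fin n) (h : (j : ℕ) = i)
    (h' : (j' : ℕ) = i + 1) : braidGen n i j' = j := by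
  have hi : (i : ℕ) < n := by have := i.2; clear h h'; omega
  have hi' : (i : ℕ) + 1 < n := by have := i.2; clear h h'; omega
  have e1 : j = ⟨i, hi⟩ := Fin.ext h
  have e2 : j' = ⟨i + 1, hi'⟩ := Fin.ext h'
  rw [e1, e2]
  exact Equiv.swap_apply_right _ _

theorem braidGen_ne (i : Fin (n - 1)) (l : Fin n) (h : (l : ℕ) ≠ i ∧ (l : ℕ) ≠ i + 1) :
    braidGen n i l = l := by
  apply Equiv.swap_apply_of_ne_of_ne
  · exact fun e => h.1 (congrArg Fin.val e)
  · exact fun e => h.2 (congrArg Fin.val e)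

/-- The group `G^n ⋊ Σ_n`. -/
abbrev RkW : Type := (Fin n → G) ⋊[permMulAut G n] Equiv.Perm (Fin n)

theorem rkW_st (g : G) (i : Fin (n - 1)) (j : Fin n) :
    (SemidirectProduct.inr (braidGen n i) * SemidirectProduct.inl (Pi.mulSingle j g) : RkW G n) =
    SemidirectProduct.inl (Pi.mulSingle (braidGen n i j) g) *
      SemidirectProduct.inr (braidGen n i) := by
  have h : permMulAut G n (braidGen n i) (Pi.mulSingle j g) =
      Pi.mulSingle (braidGen n i j) g :=
    Pi.mulSingle_comp_equiv (braidGen n i).symm j g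
  rw [← h, SemidirectProduct.inl_aut, mul_assoc, ← map_mul, inv_mul_cancel, map_one, mul_one]

/-- The images of the generators in the group algebra. -/
def rkPiGen : GRGen n G → MonoidAlgebra k (RkW G n)
  | GRGen.s i => MonoidAlgebra.of k _ (SemidirectProduct.inr (braidGen n i))
  | GRGen.p _ => 0
  | GRGen.t g j => MonoidAlgebra.of k _ (SemidirectProduct.inl (Pi.mulSingle j g))

theorem rkPi_rel (x y : FreeAlgebra k (GRGen n G)) (h : GRRel k G n ε x y) :
    FreeAlgebra.lift k (rkPiGen k G n) x = FreeAlgebra.lift k (rkPiGen k G n) y := by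
  induction h with
  | s_sq i =>
    simp only [map_mul, map_one, FreeAlgebra.lift_ι_apply, rkPiGen]
    rw [← map_mul, ← map_mul, braidGen, Equiv.swap_mul_self, map_one, map_one]
  | s_braid i j h =>
    simp only [map_mul, FreeAlgebra.lift_ι_apply, rkPiGen]
    simp only [← map_mul]
    rw [braidGen_braid n i j h.symm]
  | ss_comm i j h =>
    simp only [map_mul, FreeAlgebra.lift_ι_apply, rkPiGen]
    simp only [← map_mul]
    rw [braidGen_comm n i j h]
  | t_mul g h j =>
    simp only [map_mul, FreeAlgebra.lift_ι_apply, rkPiGen]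
    simp only [← map_mul]
    rw [Pi.mulSingle_mul]
  | t_one j =>
    simp only [map_one, FreeAlgebra.lift_ι_apply, rkPiGen, Pi.mulSingle_one]
  | tt_comm g h j l hjl =>
    simp only [map_mul, FreeAlgebra.lift_ι_apply, rkPiGen]
    simp only [← map_mul]
    rw [(Pi.mulSingle_commute (f := fun _ : Fin n => G) hjl g h).eq]
  | st_comm g i l h =>
    simp only [map_mul, FreeAlgebra.lift_ι_apply, rkPiGen]
    rw [← map_mul, ← map_mul, rkW_st, braidGen_ne n i l h]
  | st_slide g i j j' h h' =>
    simp only [map_mul, FreeAlgebra.lift_ι_apply, rkPiGen]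
    rw [← map_mul, ← map_mul, rkW_st, braidGen_left n i j j' h h']
  | st_slide' g i j j' h h' =>
    simp only [map_mul, FreeAlgebra.lift_ι_apply, rkPiGen]
    rw [← map_mul, ← map_mul, rkW_st, braidGen_right n i j j' h h']
  | _ =>
    simp only [map_mul, map_smul, FreeAlgebra.lift_ι_apply, rkPiGen, mul_zero, zero_mul, smul_zero]

/-- The projection to the group algebra. -/
def rkPi : GRAlg k G n ε →ₐ[k] MonoidAlgebra k (RkW G n) :=
  RingQuot.liftAlgHom k ⟨FreeAlgebra.lift k (rkPiGen k G n), rkPi_rel k G n ε⟩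

/-- The quotient map. -/
abbrev rkMk : FreeAlgebra k (GRGen n G) →ₐ[k] GRAlg k G n ε :=
  RingQuot.mkAlgHom k (GRRel k G n ε)

/-- The images of the generators. -/
def rkGen (x : GRGen n G) : GRAlg k G n ε := rkMk k G n ε (FreeAlgebra.ι k x)

theorem rkPi_gen (x : GRGen n G) : rkPi k G n ε (rkGen k G n ε x) = rkPiGen k G n x := by
  rw [rkPi, rkGen, RingQuot.liftAlgHom_mkAlgHom_apply, FreeAlgebra.lift_ι_apply]

theorem rk_induction {P : GRAlg k G n ε → Prop}
    (halg : ∀ r : k, P (algebraMap k _ r)) (hgen : ∀ x, P (rkGen k G n ε x))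
    (hmul : ∀ a b, P a → P b → P (a * b)) (hadd : ∀ a b, P a → P b → P (a + b)) (a) : P a := by
  obtain ⟨x, rfl⟩ := RingQuot.mkAlgHom_surjective k (GRRel k G n ε) a
  induction x using FreeAlgebra.induction with
  | grade0 r => rw [AlgHom.commutes]; exact halg r
  | grade1 x => exact hgen x
  | mul a b ha hb => rw [map_mul]; exact hmul _ _ ha hb
  | add a b ha hb => rw [map_add]; exact hadd _ _ ha hb

theorem rk_aug (a : GRAlg k G n ε) :
    groupAug k (RkW G n) (rkPi k G n ε a) = GRaug k G n ε a := by
  induction a using rk_induction with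
  | halg r => rw [AlgHom.commutes, AlgHom.commutes, AlgHom.commutes]
  | hmul a b ha hb => simp only [map_mul, ha, hb]
  | hadd a b ha hb => simp only [map_add, ha, hb]
  | hgen x =>
    rw [rkPi_gen, rkGen, GRaug, RingQuot.liftAlgHom_mkAlgHom_apply, FreeAlgebra.lift_ι_apply]
    cases x with
    | s i => simp only [rkPiGen, groupAug, MonoidAlgebra.lift_of, MonoidHom.one_apply]
    | p i => simp only [rkPiGen, map_zero]
    | t g i => simp only [rkPiGen, groupAug, MonoidAlgebra.lift_of, MonoidHom.one_apply]

theorem rk_rel {x y : FreeAlgebra k (GRGen n G)} (h : GRRel k G n ε x y) :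
    rkMk k G n ε x = rkMk k G n ε y := RingQuot.mkAlgHom_rel k h

theorem rk_fin_cases (i : Fin (n - 1)) (l : Fin n) :
    ((l : ℕ) ≠ i ∧ (l : ℕ) ≠ i + 1) ∨ (l : ℕ) = i ∨ (l : ℕ) = i + 1 := by omega

theorem rk_st (g : G) (i : Fin (n - 1)) (j : Fin n) :
    rkGen k G n ε (.s i) * rkGen k G n ε (.t g j) =
      rkGen k G n ε (.t g (braidGen n i j)) * rkGen k G n ε (.s i) := by
  unfold rkGen
  rw [← map_mul, ← map_mul]
  rcases rk_fin_cases n i j with h | h | h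
  · rw [braidGen_ne n i j h]; exact rk_rel k G n ε (.st_comm g i j h)
  · rw [braidGen_left n i j ⟨i + 1, by omega⟩ h rfl]; exact rk_rel k G n ε (.st_slide g i j _ h rfl)
  · rw [braidGen_right n i ⟨i, by omega⟩ j rfl h]; exact rk_rel k G n ε (.st_slide' g i _ j rfl h)

theorem rk_sp (i : Fin (n - 1)) (j : Fin n) :
    rkGen k G n ε (.s i) * rkGen k G n ε (.p j) =
      rkGen k G n ε (.p (braidGen n i j)) * rkGen k G n ε (.s i) := by
  unfold rkGen
  rw [← map_mul, ← map_mul]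
  rcases rk_fin_cases n i j with h | h | h
  · rw [braidGen_ne n i j h]; exact rk_rel k G n ε (.sp_comm i j h)
  · rw [braidGen_left n i j ⟨i + 1, by omega⟩ h rfl]; exact rk_rel k G n ε (.sp_slide i j _ h rfl)
  · rw [braidGen_right n i ⟨i, by omega⟩ j rfl h]; exact rk_rel k G n ε (.sp_slide' i _ j rfl h)

theorem rk_tp (g : G) (j l : Fin n) :
    rkGen k G n ε (.t g j) * rkGen k G n ε (.p l) =
      rkGen k G n ε (.p l) * rkGen k G n ε (.t g j) := by
  unfold rkGen
  rw [← map_mul, ← map_mul]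
  by_cases h : j = l
  · subst h
    exact (rk_rel k G n ε (.tp_absorb g j)).trans (rk_rel k G n ε (.pt_absorb g j)).symm
  · exact rk_rel k G n ε (.tp_comm g j l h)

theorem rk_pp (j l : Fin n) :
    rkGen k G n ε (.p j) * rkGen k G n ε (.p l) =
      rkGen k G n ε (.p l) * rkGen k G n ε (.p j) := by
  unfold rkGen
  rw [← map_mul, ← map_mul]
  rcases lt_trichotomy j l with h | h | h
  · exact rk_rel k G n ε (.pp_comm j l h)
  · rw [h]
  · exact (rk_rel k G n ε (.pp_comm l j h)).symm

theorem rk_psq (j : Fin n) :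
    rkGen k G n ε (.p j) * rkGen k G n ε (.p j) = ε • rkGen k G n ε (.p j) := by
  unfold rkGen
  rw [← map_mul, ← map_smul]
  exact rk_rel k G n ε (.p_sq j)

theorem rk_theta : ∃ Θ : RkW G n →* GRAlg k G n ε,
      (∀ i, Θ (SemidirectProduct.inr (braidGen n i)) = rkGen k G n ε (.s i)) ∧
      (∀ g j, Θ (SemidirectProduct.inl (Pi.mulSingle j g)) = rkGen k G n ε (.t g j)) := by
  refine rk_wreath n (fun i => rkGen k G n ε (.s i)) (fun g j => rkGen k G n ε (.t g j))
    ?_ ?_ ?_ ?_ ?_ ?_ (rk_st k G n ε)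
  · intro i
    have := rk_rel k G n ε (.s_sq i)
    rwa [map_mul, map_one] at this
  · intro i j h
    have := rk_rel k G n ε (.ss_comm i j h)
    rwa [map_mul, map_mul] at this
  · intro i j h
    have := rk_rel k G n ε (.s_braid i j h)
    rwa [map_mul, map_mul, map_mul, map_mul] at this
  · intro j
    have := rk_rel k G n ε (.t_one j)
    rwa [map_one] at this
  · intro g h j
    have := rk_rel k G n ε (.t_mul g h j)
    rw [map_mul] at this
    exact this.symm
  · intro g h j l hjl
    have := rk_rel k G n ε (.tt_comm g h j l hjl)
    rwa [map_mul, map_mul] at this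

theorem rk_main (hε : IsUnit ε) (q : ℕ) :
    Nonempty ((barTor k (GRAlg k G n ε) (GRaug k G n ε) q) ≃ₗ[k] (groupTor k (RkW G n) q)) := by
  obtain ⟨u, rfl⟩ := hε
  obtain ⟨Θ, hΘs, hΘt⟩ := rk_theta k G n (u : k)
  set A := GRAlg k G n (u : k) with hA
  let p : Fin n → A := fun j => rkGen k G n (u : k) (.p j)
  let e : Fin n → A := fun j => ((u⁻¹ : kˣ) : k) • p j
  have hpe : ∀ j, p j = (u : k) • e j := by
    intro j
    change p j = (u : k) • (((u⁻¹ : kˣ) : k) • p j)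
    rw [smul_smul, Units.mul_inv, one_smul]
  have hπp : ∀ j, rkPi k G n (u : k) (p j) = 0 := fun j => rkPi_gen k G n u (.p j)
  obtain ⟨f, h1, h2, h3, -, h5⟩ := rk_idem (k := k) e
    (by
      intro i j
      simp only [e, smul_mul_smul_comm]
      rw [rk_pp])
    (by
      intro i
      simp only [e, smul_mul_smul_comm]
      rw [rk_psq, smul_smul, mul_assoc, Units.inv_mul, mul_one])
    (rkPi k G n (u : k)).toRingHom
    (by
      intro i
      change rkPi k G n (u : k) (((u⁻¹ : kˣ) : k) • p i) = 0
      rw [map_smul, hπp, smul_zero])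
    (List.finRange n)
  have hfp : ∀ j, f * p j = 0 := by
    intro j; rw [hpe, mul_smul_comm, (h1 j (List.mem_finRange j)).1, smul_zero]
  have hpf : ∀ j, p j * f = 0 := by
    intro j; rw [hpe, smul_mul_assoc, (h1 j (List.mem_finRange j)).2, smul_zero]
  replace h2 : ∀ x, (∀ j, x * p j = 0) → x * f = x := by
    intro x hx
    refine h2 x fun j _ => ?_
    simp only [e, mul_smul_comm, hx, smul_zero]
  replace h3 : ∀ x, (∀ j, p j * x = 0) → f * x = x := by
    intro x hx
    refine h3 x fun j _ => ?_
    simp only [e, smul_mul_assoc, hx, smul_zero]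
  have hff : f * f = f := h2 f hfp
  have hcen : ∀ a : A, (∀ j, f * a * p j = 0) → (∀ j, p j * (a * f) = 0) → a * f = f * a := by
    intro a ha hb
    rw [← h2 (f * a) ha, mul_assoc, h3 (a * f) hb]
  let Ψ : MonoidAlgebra k (RkW G n) →ₐ[k] A := MonoidAlgebra.lift k A (RkW G n) Θ
  have key : ∀ a : A, a * f = f * a ∧ f * Ψ (rkPi k G n u a) = f * a := by
    intro a
    induction a using rk_induction with
    | halg r =>
      refine ⟨(Algebra.commutes r f), ?_⟩
      rw [AlgHom.commutes, AlgHom.commutes]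
    | hmul a b ha hb =>
      refine ⟨by rw [mul_assoc, hb.1, ← mul_assoc, ha.1, mul_assoc], ?_⟩
      rw [map_mul, map_mul, ← mul_assoc, ha.2, ← ha.1, mul_assoc, hb.2, ← mul_assoc, ha.1,
        mul_assoc]
    | hadd a b ha hb =>
      exact ⟨by rw [add_mul, mul_add, ha.1, hb.1], by
        rw [map_add, map_add, mul_add, mul_add, ha.2, hb.2]⟩
    | hgen x =>
      rw [rkPi_gen]
      cases x with
      | s i =>
        refine ⟨hcen _ ?_ ?_, ?_⟩
        · intro j
          change f * _ * rkGen k G n u (.p j) = 0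
          rw [mul_assoc, rk_sp, ← mul_assoc]
          change f * p _ * _ = 0
          rw [hfp, zero_mul]
        · intro j
          have := rk_sp k G n (u : k) i ((braidGen n i).symm j)
          rw [Equiv.apply_symm_apply] at this
          rw [← mul_assoc]
          change rkGen k G n u (.p j) * _ * f = 0
          rw [← this, mul_assoc]
          change _ * (p _ * f) = 0
          rw [hpf, mul_zero]
        · rw [rkPiGen, MonoidAlgebra.lift_of, hΘs]
      | p j =>
        refine ⟨(hpf j).trans (hfp j).symm, ?_⟩
        rw [rkPiGen, map_zero, mul_zero]
        exact (hfp j).symm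
      | t g l =>
        refine ⟨hcen _ ?_ ?_, ?_⟩
        · intro j
          change f * _ * rkGen k G n u (.p j) = 0
          rw [mul_assoc, rk_tp, ← mul_assoc]
          change f * p _ * _ = 0
          rw [hfp, zero_mul]
        · intro j
          rw [← mul_assoc]
          change rkGen k G n u (.p j) * _ * f = 0
          rw [← rk_tp, mul_assoc]
          change _ * (p _ * f) = 0
          rw [hpf, mul_zero]
        · rw [rkPiGen, MonoidAlgebra.lift_of, hΘt]
  have hπf : rkPi k G n (u : k) f = 1 := h5
  have hπΨ : ∀ r, rkPi k G n (u : k) (Ψ r) = r := by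
    intro r
    have h : ((rkPi k G n (u : k) : A →* _).comp Θ) = MonoidAlgebra.of k (RkW G n) := by
      have hl : ((rkPi k G n (u : k) : A →* _).comp Θ).comp SemidirectProduct.inl =
          (MonoidAlgebra.of k (RkW G n)).comp SemidirectProduct.inl := by
        apply MonoidHom.pi_ext
        intro j g
        change rkPi k G n (u : k) (Θ _) = _
        rw [hΘt, rkPi_gen]; rfl
      have hr : ((rkPi k G n (u : k) : A →* _).comp Θ).comp SemidirectProduct.inr =
          (MonoidAlgebra.of k (RkW G n)).comp SemidirectProduct.inr := by
        apply MonoidHom.eq_of_eqOn_denseM (rk_closure n)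
        rintro _ ⟨i, rfl⟩
        change rkPi k G n (u : k) (Θ _) = _
        rw [hΘs, rkPi_gen]; rfl
      ext w : 1
      rw [← SemidirectProduct.inl_left_mul_inr_right w, map_mul, map_mul]
      exact congrArg₂ (· * ·) (DFunLike.congr_fun hl _) (DFunLike.congr_fun hr _)
    have h' : (rkPi k G n (u : k)).comp Ψ = AlgHom.id k _ := by
      apply (MonoidAlgebra.lift k _ (RkW G n)).symm.injective
      ext w : 1
      change rkPi k G n (u : k) (Ψ (MonoidAlgebra.of k _ w)) = MonoidAlgebra.of k _ w
      rw [MonoidAlgebra.lift_of]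
      exact DFunLike.congr_fun h w
    exact DFunLike.congr_fun h' r
  have hπι : ∀ r, rkPi k G n (u : k) (f * Ψ r) = r := by
    intro r; rw [map_mul, hπf, one_mul, hπΨ]
  refine rk_barTor (GRaug k G n u) (groupAug k (RkW G n)) (rkPi k G n (u : k)).toLinearMap
    ((LinearMap.mulLeft k f).comp Ψ.toLinearMap) f
    (fun a b => map_mul (rkPi k G n (u : k)) a b) (rk_aug k G n u) ?_ ?_ hπι
    (fun a => (key a).2) ?_ hff (fun a => (key a).1) q
  · intro a b
    change f * Ψ (a * b) = f * Ψ a * (f * Ψ b)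
    rw [map_mul, ← (key (Ψ a)).1, mul_assoc (Ψ a) f, ← mul_assoc f f, hff, ← mul_assoc,
      ← mul_assoc, (key (Ψ a)).1]
  · intro a
    rw [← rk_aug]
    exact congrArg _ (hπι a)
  · rw [← rk_aug, hπf, map_one]

end RookAlgebra

/-- **Homology of `G`-equivariant rook algebras** (invertible parameter).
Let `G` be a group, `k` a commutative `G`-ring, `n` a natural number, and `ε ∈ k`
invertible.  Then there is an isomorphism of graded `k`-modules
`Tor_*^{GR_n(ε)}(𝟙,𝟙) ≅ Tor_*^{k[G^n ⋊ Σ_n]}(k,k) = H_*(G^n ⋊ Σ_n; k)`,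
where `Σ_n` acts on `G^n` by permuting the factors. -/
theorem equivariant_rook_homology (k G : Type) [CommRing k] [Group G]
    (ρ : G →* RingAut k) (n : ℕ) (ε : k) (hε : IsUnit ε) (q : ℕ) :
    Nonempty ((barTor k (GRAlg k G n ε) (GRaug k G n ε) q) ≃ₗ[k]
      (groupTor k ((Fin n → G) ⋊[permMulAut G n] Equiv.Perm (Fin n)) q)) := by
  exact rk_main k G n ε hε q
end
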